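/- Let d ≥ 2 and let p be a symmetric probability mass function on ℤ with σ² := Σ_{j∈ℤ} j² p(j) < ∞. Then for every r ≥ 1 the spherical average H_r of the free height field with increment law p on the rooted Cayley tree of order d satisfies E[H_r²] = σ² · ( ((d−1)/(d+1)) · Σ_{n=1}^{r−1} n d^{−n} + (d/(d+1)) · r d^{−r} ); in particular E[H_r²] ≤ (d/(d²−1)) σ² for every r ≥ 1. -/

import Mathlib

open MeasureTheory ProbabilityTheory Filter Finset Topology

noncomputable section

/-- A non-root vertex of the rooted Cayley tree of order `d`: the first step from the
root is one of `d+1` children, every further step one of `d` children. -/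
abbrev Vertex (d : ℕ) : Type := Fin (d + 1) × List (Fin d)

/-- depth of a non-root vertex -/
def vdepth {d : ℕ} (v : Vertex d) : ℕ := v.2.length + 1

/-- the sphere `W_r` of radius `r ≥ 1`: all vertices of depth `r` -/
def sphereW (d r : ℕ) : Finset (Vertex d) :=
  (Finset.univ : Finset (Fin (d + 1) × (Fin (r - 1) → Fin d))).image
    (fun x => (x.1, List.ofFn x.2))

/-- height at `v`: sum of the increments along the path from the root to `v`
(the prefixes of length `0,…,|v.2|` of the step list of `v` enumerate that path). -/
def heightAt {d : ℕ} {Ω : Type*} (Y : Vertex d → Ω → ℝ) (v : Vertex d) (ω : Ω) : ℝ :=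
  ∑ k ∈ Finset.range (v.2.length + 1), Y (v.1, v.2.take k) ω

/-- spherical average `H_r` of the heights at depth `r` -/
def sphAvg (d : ℕ) {Ω : Type*} (Y : Vertex d → Ω → ℝ) (r : ℕ) (ω : Ω) : ℝ :=
  (((d + 1) * d ^ (r - 1) : ℕ) : ℝ)⁻¹ * ∑ v ∈ sphereW d r, heightAt Y v ω

/-! A vertex `v` lies above a fraction `1 / |W_{|v|}|` of every deeper sphere, so `H_r` is the
sum of `Y_v / |W_{|v|}|` over the ball of radius `r`. For orthogonal increments with common second
moment `σ²` the cross terms vanish and `E[H_r²] = σ² ∑_{s=1}^r |W_s|⁻¹`, which is `σ² / (d + 1)`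
times a partial sum of the geometric series of ratio `1 / d`. Abel summation turns this into the
stated formula, and summing the whole series gives the uniform bound. -/

section Tree

variable {d : ℕ} {Ω : Type*}

/-- The child of a non-root vertex `v` in direction `x`. -/
def Vertex.child (v : Vertex d) (x : Fin d) : Vertex d := (v.1, v.2 ++ [x])

/-- The non-root vertices of depth at most `r`, indexed so that the radii start at `1`: with the
truncated subtraction in `sphereW`, the set `sphereW d 0` is a second copy of `sphereW d 1`. -/
def ballW (d r : ℕ) : Finset (Vertex d) :=
  (range r).biUnion fun m => sphereW d (m + 1)

/-- The coefficient `1 / |W_{|v|}|` of the increment at `v` in the spherical averages of radius at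
least `|v|`. -/
def sphereWeight (v : Vertex d) : ℝ := (#(sphereW d (vdepth v)) : ℝ)⁻¹

theorem sum_sphereW_succ {M : Type*} [AddCommMonoid M] (m : ℕ) (F : Vertex d → M) :
    ∑ v ∈ sphereW d (m + 1), F v =
      ∑ a : Fin (d + 1), ∑ f : Fin m → Fin d, F (a, List.ofFn f) := by
  rw [sphereW, sum_image, Fintype.sum_prod_type]
  · rfl
  · rintro ⟨a, f⟩ - ⟨b, g⟩ - h
    simp only [Prod.mk.injEq, List.ofFn_inj] at h
    exact Prod.ext h.1 h.2

theorem sum_sphereW_add_two {M : Type*} [AddCommMonoid M] (m : ℕ) (F : Vertex d → M) :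
    ∑ v ∈ sphereW d (m + 2), F v = ∑ v ∈ sphereW d (m + 1), ∑ x, F (v.child x) := by
  rw [sum_sphereW_succ, sum_sphereW_succ]
  refine sum_congr rfl fun a _ => ?_
  rw [← (Fin.snocEquiv fun _ => Fin d).sum_comp, Fintype.sum_prod_type_right]
  simp only [Vertex.child, Fin.snocEquiv_apply, List.ofFn_succ', List.concat_eq_append,
    Fin.snoc_castSucc, Fin.snoc_last]

theorem card_sphereW_succ (d m : ℕ) : #(sphereW d (m + 1)) = (d + 1) * d ^ m := by
  rw [card_eq_sum_ones, sum_sphereW_succ]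
  simp

theorem vdepth_of_mem_sphereW_succ {m : ℕ} {v : Vertex d} (hv : v ∈ sphereW d (m + 1)) :
    vdepth v = m + 1 := by
  obtain ⟨x, -, rfl⟩ := mem_image.mp hv
  simp [vdepth]

theorem sum_ballW {M : Type*} [AddCommMonoid M] (r : ℕ) (F : Vertex d → M) :
    ∑ v ∈ ballW d r, F v = ∑ m ∈ range r, ∑ v ∈ sphereW d (m + 1), F v := by
  refine sum_biUnion fun m _ n _ hmn => disjoint_left.mpr fun v hm hn => hmn ?_
  exact Nat.succ_injective <|
    (vdepth_of_mem_sphereW_succ hm).symm.trans (vdepth_of_mem_sphereW_succ hn)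

theorem sphereWeight_of_mem_sphereW_succ {m : ℕ} {v : Vertex d} (hv : v ∈ sphereW d (m + 1)) :
    sphereWeight v = (#(sphereW d (m + 1)) : ℝ)⁻¹ := by
  rw [sphereWeight, vdepth_of_mem_sphereW_succ hv]

theorem sum_sphereW_sphereWeight_mul (m : ℕ) (F : Vertex d → ℝ) :
    ∑ v ∈ sphereW d (m + 1), sphereWeight v * F v =
      (#(sphereW d (m + 1)) : ℝ)⁻¹ * ∑ v ∈ sphereW d (m + 1), F v := by
  rw [mul_sum]
  exact sum_congr rfl fun v hv => by rw [sphereWeight_of_mem_sphereW_succ hv]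

theorem sum_sphereW_sphereWeight_sq (m : ℕ) :
    ∑ v ∈ sphereW d (m + 1), sphereWeight v ^ 2 = (#(sphereW d (m + 1)) : ℝ)⁻¹ := by
  rw [sum_congr rfl fun v hv => by rw [sphereWeight_of_mem_sphereW_succ hv], sum_const,
    nsmul_eq_mul]
  field_simp

theorem sum_ballW_sphereWeight_sq (d r : ℕ) :
    ∑ v ∈ ballW d r, sphereWeight v ^ 2 =
      ((d : ℝ) + 1)⁻¹ * ∑ m ∈ range r, ((d : ℝ)⁻¹) ^ m := by
  rw [sum_ballW, mul_sum]
  refine sum_congr rfl fun m _ => ?_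
  rw [sum_sphereW_sphereWeight_sq, card_sphereW_succ]
  push_cast
  rw [mul_inv, inv_pow]

theorem heightAt_child (Y : Vertex d → Ω → ℝ) (v : Vertex d) (x : Fin d) (ω : Ω) :
    heightAt Y (v.child x) ω = heightAt Y v ω + Y (v.child x) ω := by
  simp only [heightAt, Vertex.child, List.length_append, List.length_singleton]
  rw [sum_range_succ]
  congr 1
  · refine sum_congr rfl fun k hk => ?_
    rw [List.take_append_of_le_length (Nat.lt_succ_iff.mp (mem_range.mp hk))]
  · rw [List.take_of_length_le (by simp)]

theorem sum_heightAt_sphereW_add_two (Y : Vertex d → Ω → ℝ) (m : ℕ) (ω : Ω) :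
    ∑ v ∈ sphereW d (m + 2), heightAt Y v ω =
      d * ∑ v ∈ sphereW d (m + 1), heightAt Y v ω + ∑ v ∈ sphereW d (m + 2), Y v ω := by
  simp only [sum_sphereW_add_two, heightAt_child, sum_add_distrib, sum_const, card_univ,
    Fintype.card_fin, nsmul_eq_mul, mul_sum]

theorem sphAvg_succ_eq_card_inv_mul_sum (Y : Vertex d → Ω → ℝ) (m : ℕ) (ω : Ω) :
    sphAvg d Y (m + 1) ω =
      (#(sphereW d (m + 1)) : ℝ)⁻¹ * ∑ v ∈ sphereW d (m + 1), heightAt Y v ω := by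
  rw [sphAvg, card_sphereW_succ, Nat.add_sub_cancel]

theorem sphAvg_add_two (hd : d ≠ 0) (Y : Vertex d → Ω → ℝ) (m : ℕ) (ω : Ω) :
    sphAvg d Y (m + 2) ω =
      sphAvg d Y (m + 1) ω + ∑ v ∈ sphereW d (m + 2), sphereWeight v * Y v ω := by
  have hd' : (d : ℝ) ≠ 0 := Nat.cast_ne_zero.mpr hd
  have hcard : (#(sphereW d (m + 2)) : ℝ)⁻¹ * d = (#(sphereW d (m + 1)) : ℝ)⁻¹ := by
    simp only [card_sphereW_succ, pow_succ]
    push_cast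
    field_simp
  rw [sphAvg_succ_eq_card_inv_mul_sum, sphAvg_succ_eq_card_inv_mul_sum,
    sum_heightAt_sphereW_add_two, sum_sphereW_sphereWeight_mul, mul_add, ← mul_assoc, hcard]

theorem sphAvg_one (Y : Vertex d → Ω → ℝ) (ω : Ω) :
    sphAvg d Y 1 ω = ∑ v ∈ sphereW d 1, sphereWeight v * Y v ω := by
  rw [sphAvg_succ_eq_card_inv_mul_sum, sum_sphereW_sphereWeight_mul]
  simp [sum_sphereW_succ, heightAt]

theorem sphAvg_succ_eq_sum_ballW (hd : d ≠ 0) (Y : Vertex d → Ω → ℝ) (m : ℕ) (ω : Ω) :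
    sphAvg d Y (m + 1) ω = ∑ v ∈ ballW d (m + 1), sphereWeight v * Y v ω := by
  rw [sum_ballW]
  induction m with
  | zero => rw [sphAvg_one, sum_range_one]
  | succ m ih => rw [sphAvg_add_two hd, ih, sum_range_succ _ (m + 1)]

end Tree

section GeometricSums

variable {K : Type*} [Field K]

theorem geom_sum_inv_eq_sub_one_mul_sum_Icc {x : K} (hx : x ≠ 0) (m : ℕ) :
    ∑ k ∈ range (m + 1), x⁻¹ ^ k =
      (x - 1) * ∑ n ∈ Icc 1 m, (n : K) / x ^ n + x * (((m + 1 : ℕ) : K) / x ^ (m + 1)) := by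
  induction m with
  | zero => simp [hx]
  | succ m ih =>
    rw [sum_range_succ, ih, sum_Icc_succ_top (by omega), inv_pow]
    push_cast
    field_simp
    ring

theorem geom_sum_inv_le [LinearOrder K] [IsStrictOrderedRing K] {x : K} (hx : 1 < x) (n : ℕ) :
    ∑ k ∈ range n, x⁻¹ ^ k ≤ x / (x - 1) := by
  have hx0 : 0 < x := zero_lt_one.trans hx
  rw [geom_sum_inv hx.ne' hx0.ne', div_eq_inv_mul]
  exact mul_le_mul_of_nonneg_left (sub_le_self _ (by positivity))
    (inv_nonneg.mpr (sub_nonneg.mpr hx.le))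

end GeometricSums

section DiscreteLaw

variable {Ω α E : Type*} [MeasurableSpace Ω] {P : Measure Ω}
  [MeasurableSpace α] [MeasurableSingletonClass α] [Countable α] {X : Ω → α} {p : α → ℝ}
  [NormedAddCommGroup E]

theorem hasLaw_sum_dirac (hX : Measurable X)
    (hlaw : ∀ a, P {ω | X ω = a} = ENNReal.ofReal (p a)) :
    HasLaw X (Measure.sum fun a => ENNReal.ofReal (p a) • Measure.dirac a) P where
  aemeasurable := hX.aemeasurable
  map_eq := by
    simp only [← hlaw]
    exact Measure.map_eq_sum P X hX

theorem integrable_comp_iff_summable (hX : Measurable X) (hp : ∀ a, 0 ≤ p a)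
    (hlaw : ∀ a, P {ω | X ω = a} = ENNReal.ofReal (p a)) {g : α → E} :
    Integrable (fun ω => g (X ω)) P ↔ Summable fun a => p a * ‖g a‖ := by
  have hg : AEStronglyMeasurable g (P.map X) := .of_discrete
  rw [← Function.comp_def, ← integrable_map_measure hg hX.aemeasurable,
    (hasLaw_sum_dirac hX hlaw).map_eq, integrable_sum_dirac_iff fun _ => ENNReal.ofReal_ne_top]
  simp only [ENNReal.toReal_ofReal (hp _)]

/-- If the series diverges, both sides take the junk value `0`. -/
theorem integral_comp_eq_tsum [NormedSpace ℝ E] [FiniteDimensional ℝ E] (hX : Measurable X)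
    (hp : ∀ a, 0 ≤ p a) (hlaw : ∀ a, P {ω | X ω = a} = ENNReal.ofReal (p a)) (g : α → E) :
    ∫ ω, g (X ω) ∂P = ∑' a, p a • g a := by
  rw [← Function.comp_def, (hasLaw_sum_dirac hX hlaw).integral_comp .of_discrete,
    integral_sum_dirac fun _ => ENNReal.ofReal_ne_top]
  simp only [ENNReal.toReal_ofReal (hp _)]

end DiscreteLaw

section IntegerLaw

variable {Ω : Type*} [MeasurableSpace Ω] {P : Measure Ω} {X : Ω → ℤ} {p : ℤ → ℝ}

theorem integral_intCast_eq_zero_of_symmetric (hX : Measurable X) (hp : ∀ j, 0 ≤ p j)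
    (hlaw : ∀ j, P {ω | X ω = j} = ENNReal.ofReal (p j)) (hsymm : ∀ j, p (-j) = p j) :
    ∫ ω, (X ω : ℝ) ∂P = 0 := by
  rw [integral_comp_eq_tsum hX hp hlaw fun j : ℤ => (j : ℝ)]
  have hneg := (Equiv.neg ℤ).tsum_eq fun j : ℤ => p j • (j : ℝ)
  simp only [Equiv.neg_apply, hsymm, Int.cast_neg, smul_neg, tsum_neg] at hneg
  exact self_eq_neg.mp hneg.symm

theorem integral_intCast_sq_eq_tsum (hX : Measurable X) (hp : ∀ j, 0 ≤ p j)
    (hlaw : ∀ j, P {ω | X ω = j} = ENNReal.ofReal (p j)) :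
    ∫ ω, (X ω : ℝ) ^ 2 ∂P = ∑' j : ℤ, (j : ℝ) ^ 2 * p j := by
  rw [integral_comp_eq_tsum hX hp hlaw fun j : ℤ => (j : ℝ) ^ 2]
  simp only [smul_eq_mul, mul_comm]

theorem memLp_two_intCast_of_summable (hX : Measurable X) (hp : ∀ j, 0 ≤ p j)
    (hlaw : ∀ j, P {ω | X ω = j} = ENNReal.ofReal (p j))
    (hmom : Summable fun j : ℤ => (j : ℝ) ^ 2 * p j) : MemLp (fun ω => (X ω : ℝ)) 2 P := by
  rw [memLp_two_iff_integrable_sq (by fun_prop),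
    integrable_comp_iff_summable hX hp hlaw (g := fun j : ℤ => (j : ℝ) ^ 2)]
  simpa only [norm_pow, Real.norm_eq_abs, sq_abs, mul_comm] using hmom

end IntegerLaw

section Orthogonality

variable {Ω ι : Type*} [MeasurableSpace Ω] {P : Measure Ω} {X : ι → Ω → ℝ}

theorem pairwise_integral_mul_eq_zero_of_indepFun
    (hindep : Pairwise fun i j => IndepFun (X i) (X j) P)
    (hmeas : ∀ i, AEStronglyMeasurable (X i) P) (hmean : ∀ i, ∫ ω, X i ω ∂P = 0) :
    Pairwise fun i j => ∫ ω, X i ω * X j ω ∂P = 0 := by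
  intro i j hij
  rw [(hindep hij).integral_fun_mul_eq_mul_integral (hmeas i) (hmeas j), hmean i, zero_mul]

theorem integral_sq_sum_mul_of_orthogonal (hL2 : ∀ i, MemLp (X i) 2 P)
    (horth : Pairwise fun i j => ∫ ω, X i ω * X j ω ∂P = 0) (s : Finset ι) (c : ι → ℝ) :
    ∫ ω, (∑ i ∈ s, c i * X i ω) ^ 2 ∂P = ∑ i ∈ s, c i ^ 2 * ∫ ω, X i ω ^ 2 ∂P := by
  have hint : ∀ i j, Integrable (fun ω => c i * c j * (X i ω * X j ω)) P := fun i j =>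
    ((hL2 i).integrable_mul (hL2 j)).const_mul _
  calc
    ∫ ω, (∑ i ∈ s, c i * X i ω) ^ 2 ∂P
        = ∫ ω, ∑ i ∈ s, ∑ j ∈ s, c i * c j * (X i ω * X j ω) ∂P := by
      simp only [pow_two, sum_mul_sum, mul_mul_mul_comm]
    _ = ∑ i ∈ s, ∑ j ∈ s, c i * c j * ∫ ω, X i ω * X j ω ∂P := by
      rw [integral_finsetSum _ fun i _ => integrable_finsetSum _ fun j _ => hint i j]
      refine sum_congr rfl fun i _ => ?_
      rw [integral_finsetSum _ fun j _ => hint i j]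
      simp only [integral_const_mul]
    _ = ∑ i ∈ s, c i ^ 2 * ∫ ω, X i ω ^ 2 ∂P := by
      refine sum_congr rfl fun i hi => ?_
      rw [sum_eq_single_of_mem i hi fun j _ hji => by rw [horth hji.symm, mul_zero]]
      simp only [pow_two]

end Orthogonality

section SecondMoment

variable {Ω : Type*} [MeasurableSpace Ω] {P : Measure Ω} {d : ℕ} {Y : Vertex d → Ω → ℝ} {σsq : ℝ}

theorem integral_sphAvg_succ_sq (hd : d ≠ 0) (hL2 : ∀ v, MemLp (Y v) 2 P)
    (horth : Pairwise fun v w => ∫ ω, Y v ω * Y w ω ∂P = 0)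
    (hvar : ∀ v, ∫ ω, Y v ω ^ 2 ∂P = σsq) (m : ℕ) :
    ∫ ω, sphAvg d Y (m + 1) ω ^ 2 ∂P =
      σsq * (((d : ℝ) + 1)⁻¹ * ∑ k ∈ range (m + 1), ((d : ℝ)⁻¹) ^ k) := by
  simp only [sphAvg_succ_eq_sum_ballW hd]
  rw [integral_sq_sum_mul_of_orthogonal hL2 horth]
  simp only [hvar]
  rw [← sum_mul, sum_ballW_sphereWeight_sq, mul_comm]

theorem free_spherical_average_second_moment_general (hd : d ≠ 0) (hL2 : ∀ v, MemLp (Y v) 2 P)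
    (horth : Pairwise fun v w => ∫ ω, Y v ω * Y w ω ∂P = 0)
    (hvar : ∀ v, ∫ ω, Y v ω ^ 2 ∂P = σsq) {r : ℕ} (hr : 1 ≤ r) :
    (∫ ω, sphAvg d Y r ω ^ 2 ∂P =
      σsq * (((d : ℝ) - 1) / ((d : ℝ) + 1) * ∑ n ∈ Icc 1 (r - 1), (n : ℝ) / (d : ℝ) ^ n
        + (d : ℝ) / ((d : ℝ) + 1) * ((r : ℝ) / (d : ℝ) ^ r))) ∧
    (2 ≤ d → ∫ ω, sphAvg d Y r ω ^ 2 ∂P ≤ (d : ℝ) / ((d : ℝ) ^ 2 - 1) * σsq) := by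
  obtain ⟨m, rfl⟩ := Nat.exists_eq_add_of_le' hr
  rw [integral_sphAvg_succ_sq hd hL2 horth hvar, Nat.add_sub_cancel]
  refine ⟨?_, fun hd2 => ?_⟩
  · rw [geom_sum_inv_eq_sub_one_mul_sum_Icc (Nat.cast_ne_zero.mpr hd)]
    ring
  · have hd1 : (1 : ℝ) < d := by exact_mod_cast hd2
    have hσ : 0 ≤ σsq := hvar (0, []) ▸ integral_nonneg fun _ => sq_nonneg _
    calc
      σsq * (((d : ℝ) + 1)⁻¹ * ∑ k ∈ range (m + 1), ((d : ℝ)⁻¹) ^ k)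
          ≤ σsq * (((d : ℝ) + 1)⁻¹ * (d / (d - 1))) := by gcongr; exact geom_sum_inv_le hd1 _
      _ = d / ((d : ℝ) ^ 2 - 1) * σsq := by
        rw [← one_pow (M := ℝ) 2, sq_sub_sq, one_pow, ← div_div]
        ring

end SecondMoment

/-- Exact second moment of the spherical average `H_r` of the free height
field, and the uniform bound `E[H_r²] ≤ d σ²/(d²-1)`. -/
theorem free_spherical_average_second_moment
    {Ω : Type} [MeasurableSpace Ω] (P : Measure Ω) [IsProbabilityMeasure P]
    (d : ℕ) (hd : 2 ≤ d)
    (p : ℤ → ℝ) (hp0 : ∀ j, 0 ≤ p j) (hpsum : Summable p) (hp1 : ∑' j, p j = 1)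
    (hsymm : ∀ j, p (-j) = p j)
    (hmom : Summable (fun j : ℤ => (j : ℝ) ^ 2 * p j))
    (Y : Vertex d → Ω → ℤ) (hmeas : ∀ v, Measurable (Y v))
    (hindep : iIndepFun Y P)
    (hlaw : ∀ v (j : ℤ), P {ω | Y v ω = j} = ENNReal.ofReal (p j)) :
    ∀ r : ℕ, 1 ≤ r →
      (∫ ω, (sphAvg d (fun v ω => (Y v ω : ℝ)) r ω) ^ 2 ∂P =
        (∑' j : ℤ, (j : ℝ) ^ 2 * p j) *
          (((d : ℝ) - 1) / ((d : ℝ) + 1) * ∑ n ∈ Finset.Icc 1 (r - 1), (n : ℝ) / (d : ℝ) ^ n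
            + (d : ℝ) / ((d : ℝ) + 1) * ((r : ℝ) / (d : ℝ) ^ r))) ∧
      ∫ ω, (sphAvg d (fun v ω => (Y v ω : ℝ)) r ω) ^ 2 ∂P ≤
        (d : ℝ) / ((d : ℝ) ^ 2 - 1) * ∑' j : ℤ, (j : ℝ) ^ 2 * p j := by
  intro r hr
  have hL2 v := memLp_two_intCast_of_summable (hmeas v) hp0 (hlaw v) hmom
  have hmean v := integral_intCast_eq_zero_of_symmetric (hmeas v) hp0 (hlaw v) hsymm
  have hvar v := integral_intCast_sq_eq_tsum (hmeas v) hp0 (hlaw v)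
  have hindep_real : iIndepFun (fun v ω => (Y v ω : ℝ)) P :=
    hindep.comp (fun _ => Int.cast) fun _ => .of_discrete
  have horth := pairwise_integral_mul_eq_zero_of_indepFun (fun _ _ => hindep_real.indepFun)
    (fun v => (hL2 v).aestronglyMeasurable) hmean
  exact (free_spherical_average_second_moment_general (by omega) hL2 horth hvar hr).imp_right (· hd)
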